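/- Let k, i, j be integers with 1 < i < k and j ≥ 1. Set K = k + 2(j−1) and F = {i+j−1,…,i+2(j−1)} (a block of j consecutive elements). The number of permutations σ of {1,…,K} such that σ(F) = F and σ fixes no prefix of size s for any s ∈ {j,…,i+j−2} ∪ {i+2(j−1),…,K−1} equals j!·c_{k+j−2}^{{j,…,k+j−3}}. -/

import Mathlib

open Nat Finset

/-- The prefix `{1, …, j}` of `{1, …, n}`. We represent `{1, …, n}` by `Fin n`,
an element `x : Fin n` having label `x.val + 1`; so the prefix of size `j` is the
set of elements with label at most `j`. -/
def pref (n j : ℕ) : Finset (Fin n) :=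
  Finset.univ.filter (fun x => x.val + 1 ≤ j)

/-- The segment `{u, …, v}` inside `{1, …, n}` (labels as above). -/
def seg (n u v : ℕ) : Finset (Fin n) :=
  Finset.univ.filter (fun x => u ≤ x.val + 1 ∧ x.val + 1 ≤ v)

/-- A permutation `σ` of `{1, …, n}` fixes a prefix of size `j` if
`σ({1, …, j}) = {1, …, j}`. -/
def FixesPrefix {n : ℕ} (σ : Equiv.Perm (Fin n)) (j : ℕ) : Prop :=
  (pref n j).image σ = pref n j

/-- `c n`: the number of connected permutations of size `n`, i.e. permutations of
`{1, …, n}` fixing no prefix of size `j` for any `1 ≤ j ≤ n - 1`. -/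
noncomputable def c (n : ℕ) : ℕ :=
  Nat.card {σ : Equiv.Perm (Fin n) // ∀ j, 1 ≤ j → j ≤ n - 1 → ¬ FixesPrefix σ j}

/-- `cS n S`: the number of `S`-connected permutations of size `n`, i.e. permutations of
`{1, …, n}` fixing no prefix of size `j` for any `j ∈ S`. -/
noncomputable def cS (n : ℕ) (S : Finset ℕ) : ℕ :=
  Nat.card {σ : Equiv.Perm (Fin n) // ∀ j ∈ S, ¬ FixesPrefix σ j}

/-!
A permutation fixing the block `F` of size `j` is a pair: a permutation `ρ` of `F` and a
permutation `τ` of its complement, relabelled as an initial segment. A prefix that contains `F` or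
avoids it is fixed exactly when `τ` fixes the prefix that remains after deleting `F`, so the
conditions on the prefixes constrain only `τ`, and `ρ` contributes the factor `j !`.
-/

theorem image_perm_eq_self_iff {α : Type*} [DecidableEq α] (σ : Equiv.Perm α) (s : Finset α) :
    s.image σ = s ↔ ∀ x ∈ s, σ x ∈ s := by
  refine ⟨fun h x hx => h ▸ mem_image_of_mem σ hx, fun h => ?_⟩
  exact eq_of_subset_of_card_le (image_subset_iff.2 h) (card_image_of_injective s σ.injective).ge

theorem fixesPrefix_iff_forall_lt {n : ℕ} (σ : Equiv.Perm (Fin n)) (s : ℕ) :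
    FixesPrefix σ s ↔ ∀ x : Fin n, (x : ℕ) < s → (σ x : ℕ) < s := by
  simp only [FixesPrefix, image_perm_eq_self_iff, pref, mem_filter, mem_univ, true_and,
    Nat.succ_le_iff]

section BlockDecomposition

variable {a j m : ℕ}

/-- Splits the `m + j` positions into the block of `j` consecutive positions following the first
`a` of them, and the other `m` positions in increasing order. Positions are the 0-based elements
of `Fin (m + j)`, so the block carries the labels `a + 1, …, a + j`. -/
noncomputable def insertBlock (ha : a ≤ m) : Fin j ⊕ Fin m ≃ Fin (m + j) :=
  Equiv.ofBijective
    (Sum.elim (fun x => ⟨a + x, by omega⟩)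
      (fun y => ⟨if (y : ℕ) < a then y else y + j, by split_ifs <;> omega⟩))
    ((Fintype.bijective_iff_injective_and_card _).2 ⟨by
      rintro (x | x) (y | y) h <;>
        simp only [Sum.elim_inl, Sum.elim_inr, Fin.mk.injEq] at h <;> grind,
      by simp [Nat.add_comm]⟩)

theorem coe_insertBlock_inl (ha : a ≤ m) (x : Fin j) :
    (insertBlock ha (.inl x) : ℕ) = a + x :=
  rfl

theorem coe_insertBlock_inr (ha : a ≤ m) (y : Fin m) :
    (insertBlock (j := j) ha (.inr y) : ℕ) = if (y : ℕ) < a then (y : ℕ) else y + j :=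
  rfl

theorem insertBlock_mem_seg_iff (ha : a ≤ m) (z : Fin j ⊕ Fin m) :
    insertBlock ha z ∈ seg (m + j) (a + 1) (a + j) ↔ z.isLeft := by
  rcases z with x | y
  · simp only [seg, mem_filter, mem_univ, true_and, coe_insertBlock_inl, Sum.isLeft_inl, iff_true]
    omega
  · simp only [seg, mem_filter, mem_univ, true_and, coe_insertBlock_inr, Sum.isLeft_inr,
      Bool.false_eq_true, iff_false]
    split_ifs <;> omega

/-- The permutation acting as `ρ` on the block of `j` positions following the first `a`
positions, and as `τ` on the other positions; permutations that fix the block are exactly the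
ones of this form. -/
noncomputable def blockSum (ha : a ≤ m) (ρ : Equiv.Perm (Fin j)) (τ : Equiv.Perm (Fin m)) :
    Equiv.Perm (Fin (m + j)) :=
  (insertBlock ha).permCongr (ρ.sumCongr τ)

theorem blockSum_insertBlock (ha : a ≤ m) (ρ : Equiv.Perm (Fin j)) (τ : Equiv.Perm (Fin m))
    (z : Fin j ⊕ Fin m) : blockSum ha ρ τ (insertBlock ha z) = insertBlock ha (z.map ρ τ) := by
  simp only [blockSum, Equiv.permCongr_apply, Equiv.symm_apply_apply, Equiv.Perm.sumCongr_apply]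

theorem blockSum_injective (ha : a ≤ m) :
    Function.Injective fun p : Equiv.Perm (Fin j) × Equiv.Perm (Fin m) => blockSum ha p.1 p.2 :=
  (insertBlock ha).permCongr.injective.comp Equiv.Perm.sumCongrHom_injective

theorem image_blockSum_seg (ha : a ≤ m) (ρ : Equiv.Perm (Fin j)) (τ : Equiv.Perm (Fin m)) :
    (seg (m + j) (a + 1) (a + j)).image (blockSum ha ρ τ) = seg (m + j) (a + 1) (a + j) := by
  rw [image_perm_eq_self_iff, ← (insertBlock ha).forall_congr_right]
  simp only [blockSum_insertBlock, insertBlock_mem_seg_iff, Sum.isLeft_map, imp_self, implies_true]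

theorem exists_blockSum_eq_of_image_seg_eq (ha : a ≤ m) {σ : Equiv.Perm (Fin (m + j))}
    (hσ : (seg (m + j) (a + 1) (a + j)).image σ = seg (m + j) (a + 1) (a + j)) :
    ∃ p : Equiv.Perm (Fin j) × Equiv.Perm (Fin m), blockSum ha p.1 p.2 = σ := by
  have mapsTo_inl : Set.MapsTo ((insertBlock ha).symm.permCongr σ)
      (Set.range Sum.inl) (Set.range Sum.inl) := by
    rintro _ ⟨x, rfl⟩
    have hx := (image_perm_eq_self_iff σ _).1 hσ _ ((insertBlock_mem_seg_iff ha (.inl x)).2 rfl)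
    rw [← (insertBlock ha).apply_symm_apply (σ _), insertBlock_mem_seg_iff] at hx
    obtain ⟨y, hy⟩ := Sum.isLeft_iff.1 hx
    exact ⟨y, hy.symm⟩
  obtain ⟨p, hp⟩ := Equiv.Perm.mem_sumCongrHom_range_of_perm_mapsTo_inl mapsTo_inl
  exact ⟨p, ((insertBlock ha).permCongr.symm_apply_eq.1 hp.symm).symm⟩

theorem fixesPrefix_blockSum_iff (ha : a ≤ m) (ρ : Equiv.Perm (Fin j)) (τ : Equiv.Perm (Fin m))
    {s t : ℕ}
    (hblock : ∀ x x' : Fin j,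
      (insertBlock ha (.inl x) : ℕ) < s → (insertBlock ha (.inl x') : ℕ) < s)
    (hrest : ∀ y : Fin m, (insertBlock (j := j) ha (.inr y) : ℕ) < s ↔ (y : ℕ) < t) :
    FixesPrefix (blockSum ha ρ τ) s ↔ FixesPrefix τ t := by
  rw [fixesPrefix_iff_forall_lt, fixesPrefix_iff_forall_lt,
    ← (insertBlock ha).forall_congr_right]
  simp only [blockSum_insertBlock, Sum.forall, Sum.map_inl, Sum.map_inr, hrest]
  exact and_iff_right fun x => hblock x (ρ x)

theorem fixesPrefix_blockSum_iff_of_le (ha : a ≤ m) (ρ : Equiv.Perm (Fin j))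
    (τ : Equiv.Perm (Fin m)) {s : ℕ} (hs : s ≤ a) :
    FixesPrefix (blockSum ha ρ τ) s ↔ FixesPrefix τ s := by
  apply fixesPrefix_blockSum_iff
  · simp only [coe_insertBlock_inl]
    omega
  · intro y
    rw [coe_insertBlock_inr]
    split_ifs <;> omega

theorem fixesPrefix_blockSum_add_iff (ha : a ≤ m) (ρ : Equiv.Perm (Fin j))
    (τ : Equiv.Perm (Fin m)) {t : ℕ} (ht : a ≤ t) :
    FixesPrefix (blockSum ha ρ τ) (t + j) ↔ FixesPrefix τ t := by
  apply fixesPrefix_blockSum_iff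
  · simp only [coe_insertBlock_inl]
    omega
  · intro y
    rw [coe_insertBlock_inr]
    split_ifs <;> omega

theorem forall_not_fixesPrefix_blockSum_iff (ha : a ≤ m) {S T : Finset ℕ}
    (hS : ∀ s ∈ S, s ≤ a) (hT : ∀ t ∈ T, a ≤ t) (ρ : Equiv.Perm (Fin j))
    (τ : Equiv.Perm (Fin m)) :
    (∀ s ∈ S ∪ T.image (· + j), ¬ FixesPrefix (blockSum ha ρ τ) s) ↔
      ∀ s ∈ S ∪ T, ¬ FixesPrefix τ s := by
  simp only [forall_mem_union, forall_mem_image]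
  refine and_congr (forall₂_congr fun s hs => ?_) (forall₂_congr fun t ht => ?_)
  · rw [fixesPrefix_blockSum_iff_of_le ha ρ τ (hS s hs)]
  · rw [fixesPrefix_blockSum_add_iff ha ρ τ (hT t ht)]

theorem setOf_image_seg_eq_and_not_fixesPrefix_eq_image (ha : a ≤ m) {S T : Finset ℕ}
    (hS : ∀ s ∈ S, s ≤ a) (hT : ∀ t ∈ T, a ≤ t) :
    {σ : Equiv.Perm (Fin (m + j)) |
      (seg (m + j) (a + 1) (a + j)).image σ = seg (m + j) (a + 1) (a + j) ∧
      ∀ s ∈ S ∪ T.image (· + j), ¬ FixesPrefix σ s} =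
    (fun p : Equiv.Perm (Fin j) × Equiv.Perm (Fin m) => blockSum ha p.1 p.2) ''
      (Set.univ ×ˢ {τ | ∀ s ∈ S ∪ T, ¬ FixesPrefix τ s}) := by
  ext σ
  constructor
  · rintro ⟨hseg, hprefix⟩
    obtain ⟨⟨ρ, τ⟩, rfl⟩ := exists_blockSum_eq_of_image_seg_eq ha hseg
    have hτ := (forall_not_fixesPrefix_blockSum_iff ha hS hT ρ τ).1 hprefix
    exact ⟨(ρ, τ), ⟨Set.mem_univ ρ, hτ⟩, rfl⟩
  · rintro ⟨⟨ρ, τ⟩, ⟨-, hτ⟩, rfl⟩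
    exact ⟨image_blockSum_seg ha ρ τ, (forall_not_fixesPrefix_blockSum_iff ha hS hT ρ τ).2 hτ⟩

theorem count_fan_fixed_general (ha : a ≤ m) {S T : Finset ℕ}
    (hS : ∀ s ∈ S, s ≤ a) (hT : ∀ t ∈ T, a ≤ t) :
    Nat.card {σ : Equiv.Perm (Fin (m + j)) //
      (seg (m + j) (a + 1) (a + j)).image σ = seg (m + j) (a + 1) (a + j) ∧
      ∀ s ∈ S ∪ T.image (· + j), ¬ FixesPrefix σ s} = j ! * cS m (S ∪ T) := by
  rw [← Set.coe_ofPred, Nat.card_coe_set_eq,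
    setOf_image_seg_eq_and_not_fixesPrefix_eq_image ha hS hT,
    Set.ncard_image_of_injective _ (blockSum_injective ha), Set.ncard_prod, Set.ncard_univ,
    Nat.card_perm, Nat.card_fin, cS, ← Set.coe_ofPred, Nat.card_coe_set_eq]

end BlockDecomposition

/-- For `1 < i < k` and `j ≥ 1`, with `K = k + 2(j−1)` and `F = {i+j−1,…,i+2(j−1)}`,
the number of permutations `σ` of `{1,…,K}` such that `σ(F) = F` and `σ` fixes no prefix of
size `s` for any `s ∈ {j,…,i+j−2} ∪ {i+2(j−1),…,K−1}` equals `j!·c_{k+j−2}^{{j,…,k+j−3}}`. -/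
theorem count_fan_fixed (k i j : ℕ) (h1 : 1 < i) (h2 : i < k) (hj : 1 ≤ j) :
    Nat.card {σ : Equiv.Perm (Fin (k + 2 * (j - 1))) //
      (seg (k + 2 * (j - 1)) (i + j - 1) (i + 2 * (j - 1))).image σ =
        seg (k + 2 * (j - 1)) (i + j - 1) (i + 2 * (j - 1)) ∧
      ∀ s ∈ Finset.Icc j (i + j - 2) ∪
          Finset.Icc (i + 2 * (j - 1)) (k + 2 * (j - 1) - 1), ¬ FixesPrefix σ s}
    = j ! * cS (k + j - 2) (Finset.Icc j (k + j - 3)) := by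
  have hK : k + 2 * (j - 1) = k + j - 2 + j := by omega
  have hlo : i + j - 1 = i + j - 2 + 1 := by omega
  have hhi : i + 2 * (j - 1) = i + j - 2 + j := by omega
  have hlast : k + j - 2 + j - 1 = k + j - 3 + j := by omega
  have hunion : Icc j (k + j - 3) = Icc j (i + j - 2) ∪ Icc (i + j - 2) (k + j - 3) := by
    simp only [← coe_inj, coe_union, coe_Icc]
    exact (Set.Icc_union_Icc_eq_Icc (by omega) (by omega)).symm
  rw [hK, hlo, hhi, hlast, ← image_add_right_Icc, hunion]
  exact count_fan_fixed_general (by omega) (fun s hs => (mem_Icc.1 hs).2)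
    (fun t ht => (mem_Icc.1 ht).1)
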